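/- arXiv:1604.00530 — 3 statements merged into one kernel-verified Lean document; each statement's English description precedes it below -/
import Mathlib

section
/- There exists a constant C_N > 0, depending only on the dimension N, with the following property: whenever Ω ⊂ ℝ^N is a bounded open convex set, λ > 0, and φ ∈ C²(Ω) ∩ C(closure(Ω)) satisfies Δφ + λφ = 0 in Ω, φ > 0 in Ω, and φ = 0 on ∂Ω, then any point x_∞ ∈ Ω at which φ attains its maximum over closure(Ω) satisfies dist(x_∞, ∂Ω) ≥ C_N · r_Ω · (r_Ω / diam(Ω))^{N²−1}. -/
/-- The Laplacian of `f : ℝ^N → ℝ`, as the sum of the unmixed second partial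
derivatives in the coordinate directions. -/
noncomputable def lapE {N : ℕ} (f : EuclideanSpace ℝ (Fin N) → ℝ)
    (x : EuclideanSpace ℝ (Fin N)) : ℝ :=
  ∑ i : Fin N,
    fderiv ℝ (fun y => fderiv ℝ f y (EuclideanSpace.single i 1)) x (EuclideanSpace.single i 1)

/-- The inradius of `Ω`: the supremum of the radii of open balls contained in `Ω`. -/
noncomputable def inradius {N : ℕ} (Ω : Set (EuclideanSpace ℝ (Fin N))) : ℝ :=
  sSup {r : ℝ | ∃ x, Metric.ball x r ⊆ Ω}

/-! Two elementary comparisons bound the eigenvalue `lam` from both sides.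

* Upper bound: if a ball of radius `r` lies in `Ω`, testing Barta's inequality with
  `(r ^ 2 - ‖x - c‖ ^ 2) ^ 2` on that ball gives `2 * lam * r ^ 2 ≤ (N + 2) ^ 2`.
* Lower bound: convexity provides a supporting half-space at the boundary point nearest to the
  maximum point `x₀`. Let `q` be affine, with value `h > d = dist(x₀, ∂Ω)` and unit slope on the
  boundary of the half-space, decreasing inwards. If `lam * h ^ 2 < 2`, the function
  `h ^ 2 * φ + φ x₀ * q ^ 2` is strictly subharmonic on `Ω ∩ {q > 0}`, yet its value at `x₀` exceeds
  all its boundary values. Hence `2 ≤ lam * d ^ 2`.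

Together these give `2 * r_Ω ≤ (N + 2) * d`, which is stronger than the bound with the power of
`r_Ω / diam Ω`, a quotient that is at most `1`.
-/

open InnerProductSpace Laplacian Metric Set Filter Module
open scoped Topology

section SecondDerivative

theorem deriv_deriv_nonpos_of_isLocalMax {f : ℝ → ℝ} {a : ℝ} (hf : ContinuousAt f a)
    (hmax : IsLocalMax f a) : deriv (deriv f) a ≤ 0 := by
  by_contra! hpos
  have hmin : IsLocalMin f a := isLocalMin_of_deriv_deriv_pos hpos hmax.deriv_eq_zero hf
  have hconst : f =ᶠ[𝓝 a] fun _ => f a := by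
    filter_upwards [hmax, hmin] with t hle hge using le_antisymm hle hge
  have hzero : deriv (deriv f) a = 0 := by simp [hconst.deriv.deriv_eq]
  exact hpos.ne' hzero

variable {E : Type*} [NormedAddCommGroup E] [NormedSpace ℝ E] {f : E → ℝ} {x : E}

theorem deriv_deriv_comp_add_smul (hf : ContDiffAt ℝ 2 f x) (v : E) :
    deriv (deriv fun t : ℝ => f (x + t • v)) 0 = fderiv ℝ (fderiv ℝ f) x v v := by
  have hline (t : ℝ) : HasDerivAt (fun t : ℝ => x + t • v) v t := by
    simpa using ((hasDerivAt_id t).smul_const v).const_add x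
  have htend : Tendsto (fun t : ℝ => x + t • v) (𝓝 0) (𝓝 x) := by
    simpa using (hline 0).continuousAt.tendsto
  have hfirst : deriv (fun t : ℝ => f (x + t • v)) =ᶠ[𝓝 0] fun t => fderiv ℝ f (x + t • v) v := by
    filter_upwards [htend.eventually (hf.eventually (by simp))] with t ht
    exact ((ht.differentiableAt (by simp)).hasFDerivAt.comp_hasDerivAt t (hline t)).deriv
  have hfderiv : HasFDerivAt (fderiv ℝ f) (fderiv ℝ (fderiv ℝ f) x) (x + (0 : ℝ) • v) := by
    simpa using
      ((hf.fderiv_right (m := 1) (by norm_num)).differentiableAt (by simp)).hasFDerivAt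
  have hsecond : HasDerivAt (fun t : ℝ => fderiv ℝ f (x + t • v))
      (fderiv ℝ (fderiv ℝ f) x v) 0 := hfderiv.comp_hasDerivAt 0 (hline 0)
  rw [hfirst.deriv_eq, (hsecond.clm_apply (hasDerivAt_const 0 v)).deriv]
  simp

theorem fderiv_fderiv_nonpos_of_isLocalMax (hf : ContDiffAt ℝ 2 f x) (hmax : IsLocalMax f x)
    (v : E) : fderiv ℝ (fderiv ℝ f) x v v ≤ 0 := by
  have hline : ContinuousAt (fun t : ℝ => x + t • v) 0 := by fun_prop
  rw [← deriv_deriv_comp_add_smul hf]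
  apply deriv_deriv_nonpos_of_isLocalMax
  · exact ContinuousAt.comp' (by simpa using hf.continuousAt) hline
  · exact IsLocalMax.comp_continuous (g := fun t : ℝ => x + t • v) (by simpa using hmax) hline

theorem fderiv_fderiv_sq (hf : ContDiffAt ℝ 2 f x) (v : E) :
    fderiv ℝ (fderiv ℝ (f ^ 2)) x v v =
      2 * (f x * fderiv ℝ (fderiv ℝ f) x v v + fderiv ℝ f x v ^ 2) := by
  have hfirst : fderiv ℝ (f ^ 2) =ᶠ[𝓝 x] fun y => (2 * f y) • fderiv ℝ f y := by
    filter_upwards [hf.eventually (by simp)] with y hy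
    simp [fderiv_pow 2 (hy.differentiableAt (by simp))]
  have hf' : DifferentiableAt ℝ f x := hf.differentiableAt (by simp)
  have hfderiv : DifferentiableAt ℝ (fderiv ℝ f) x :=
    (hf.fderiv_right (m := 1) (by norm_num)).differentiableAt (by simp)
  rw [hfirst.fderiv_eq, fderiv_fun_smul (hf'.const_mul 2) hfderiv, fderiv_const_mul hf']
  simp
  ring

end SecondDerivative

section Laplacian

variable {E : Type*} [NormedAddCommGroup E] [InnerProductSpace ℝ E] [FiniteDimensional ℝ E]
  {f : E → ℝ} {x : E}

theorem laplacian_eq_sum_fderiv_fderiv {ι : Type*} [Fintype ι] (b : OrthonormalBasis ι ℝ E)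
    (f : E → ℝ) (x : E) : Δ f x = ∑ i, fderiv ℝ (fderiv ℝ f) x (b i) (b i) := by
  simp [laplacian_eq_iteratedFDeriv_orthonormalBasis f b, iteratedFDeriv_two_apply]

theorem lapE_eq_laplacian {N : ℕ} {f : EuclideanSpace ℝ (Fin N) → ℝ}
    {x : EuclideanSpace ℝ (Fin N)} (hf : ContDiffAt ℝ 2 f x) : lapE f x = Δ f x := by
  have hfderiv : DifferentiableAt ℝ (fderiv ℝ f) x :=
    (hf.fderiv_right (m := 1) (by norm_num)).differentiableAt (by simp)
  rw [laplacian_eq_sum_fderiv_fderiv (EuclideanSpace.basisFun (Fin N) ℝ), lapE]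
  refine Finset.sum_congr rfl fun i _ => ?_
  simp [fderiv_clm_apply hfderiv (differentiableAt_const _)]

theorem laplacian_nonpos_of_isLocalMax (hf : ContDiffAt ℝ 2 f x) (hmax : IsLocalMax f x) :
    Δ f x ≤ 0 := by
  rw [laplacian_eq_sum_fderiv_fderiv (stdOrthonormalBasis ℝ E)]
  exact Finset.sum_nonpos fun i _ => fderiv_fderiv_nonpos_of_isLocalMax hf hmax _

theorem laplacian_sq (hf : ContDiffAt ℝ 2 f x) :
    Δ (f ^ 2) x = 2 * (f x * Δ f x + ‖fderiv ℝ f x‖ ^ 2) := by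
  simp only [laplacian_eq_sum_fderiv_fderiv (stdOrthonormalBasis ℝ E), fderiv_fderiv_sq hf,
    (stdOrthonormalBasis ℝ E).norm_dual, ← Finset.mul_sum, Finset.sum_add_distrib]

theorem laplacian_sq_clm_sub_const (F : StrongDual ℝ E) (a : ℝ) (x : E) :
    Δ ((fun y => F y - a) ^ 2) x = 2 * ‖F‖ ^ 2 := by
  have hfderiv : fderiv ℝ (fun y => F y - a) = fun _ => F := by
    funext y
    exact (F.hasFDerivAt.sub_const a).fderiv
  have hlap : Δ (fun y => F y - a) x = 0 := by
    simp [laplacian_eq_sum_fderiv_fderiv (stdOrthonormalBasis ℝ E), hfderiv]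
  rw [laplacian_sq (by fun_prop), hlap, hfderiv]
  ring

theorem laplacian_sq_const_sub_norm_sub_sq (a : ℝ) (c x : E) :
    Δ ((fun y => a - ‖y - c‖ ^ 2) ^ 2) x =
      8 * ‖x - c‖ ^ 2 - 4 * finrank ℝ E * (a - ‖x - c‖ ^ 2) := by
  have hcontDiff : ContDiff ℝ 2 fun y => a - ‖y - c‖ ^ 2 :=
    contDiff_const.sub ((contDiff_id.sub contDiff_const).norm_sq ℝ)
  have hfderiv : fderiv ℝ (fun y => a - ‖y - c‖ ^ 2) = fun y => (-2 : ℝ) • innerSL ℝ (y - c) := by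
    funext y
    have hsub : HasFDerivAt (fun y => y - c) (ContinuousLinearMap.id ℝ E) y :=
      (hasFDerivAt_id y).sub_const c
    rw [(hsub.norm_sq.const_sub a).fderiv]
    ext
    simp
  have hfderiv_fderiv :
      fderiv ℝ (fun y => (-2 : ℝ) • innerSL ℝ (y - c)) x = (-2 : ℝ) • innerSL ℝ :=
    (((innerSL ℝ).hasFDerivAt.comp x ((hasFDerivAt_id x).sub_const c)).const_smul (-2 : ℝ)).fderiv
  have hlap : Δ (fun y => a - ‖y - c‖ ^ 2) x = -2 * finrank ℝ E := by
    rw [laplacian_eq_sum_fderiv_fderiv (stdOrthonormalBasis ℝ E), hfderiv, hfderiv_fderiv]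
    have hunit (i) : innerSL ℝ (stdOrthonormalBasis ℝ E i) (stdOrthonormalBasis ℝ E i) = 1 := by
      rw [innerSL_apply_apply, real_inner_self_eq_norm_sq, OrthonormalBasis.norm_eq_one, one_pow]
    simp [hunit, mul_comm]
  rw [laplacian_sq hcontDiff.contDiffAt, hlap, hfderiv]
  simp only [norm_smul, innerSL_apply_norm, Real.norm_eq_abs, mul_pow, sq_abs]
  ring

end Laplacian

section EigenvalueBounds

variable {E : Type*} [NormedAddCommGroup E] [InnerProductSpace ℝ E] [FiniteDimensional ℝ E]
  {Ω : Set E} {φ : E → ℝ} {lam : ℝ}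

theorem mul_laplacian_le_of_isLocalMax_div {v : E → ℝ} {y : E} (hv : ContDiffAt ℝ 2 v y)
    (hφ : ContDiffAt ℝ 2 φ y) (hφy : 0 < φ y) (hmax : IsLocalMax (v / φ) y) :
    φ y * Δ v y ≤ v y * Δ φ y := by
  have hloc : IsLocalMax (φ y • v - v y • φ) y := by
    filter_upwards [hmax, hφ.continuousAt.eventually_const_lt hφy] with z hz hφz
    have hcross : v z * φ y ≤ v y * φ z := (div_le_div_iff₀ hφz hφy).1 hz
    simp only [Pi.sub_apply, Pi.smul_apply, smul_eq_mul]
    linarith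
  have hφv : ContDiffAt ℝ 2 (φ y • v) y := hv.const_smul (φ y)
  have hvφ : ContDiffAt ℝ 2 (v y • φ) y := hφ.const_smul (v y)
  have hlap : Δ (φ y • v - v y • φ) y ≤ 0 :=
    laplacian_nonpos_of_isLocalMax (hφv.sub hvφ) hloc
  rw [hφv.laplacian_sub hvφ, laplacian_smul _ hv,
    laplacian_smul _ hφ] at hlap
  simpa using hlap

/-- Barta's inequality, attained at an interior maximum point of `v / φ`. -/
theorem exists_mul_laplacian_le_mul_laplacian {v : E → ℝ} (ho : IsOpen Ω)
    (hb : Bornology.IsBounded Ω) (hv : ContDiffOn ℝ 2 v Ω) (hv_cont : ContinuousOn v (closure Ω))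
    (hφ : ContDiffOn ℝ 2 φ Ω) (hφ_cont : ContinuousOn φ (closure Ω))
    (hφ_pos : ∀ x ∈ closure Ω, 0 < φ x) (hv_frontier : ∀ x ∈ frontier Ω, v x ≤ 0)
    (hv_pos : ∃ x ∈ Ω, 0 < v x) : ∃ y ∈ Ω, φ y * Δ v y ≤ v y * Δ φ y := by
  obtain ⟨c, hc, hvc⟩ := hv_pos
  obtain ⟨y, hy, hmax⟩ : ∃ y ∈ Ω, IsLocalMax (v / φ) y := by
    refine hb.isCompact_closure.exists_isLocalMax_mem_open subset_closure
      (hv_cont.div hφ_cont fun x hx => (hφ_pos x hx).ne') (subset_closure hc)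
      (fun z hz => ?_) ho
    have hvz : v z ≤ 0 := hv_frontier z (ho.frontier_eq ▸ hz)
    exact (div_nonpos_of_nonpos_of_nonneg hvz (hφ_pos z hz.1).le).trans_lt
      (div_pos hvc (hφ_pos c (subset_closure hc)))
  exact ⟨y, hy, mul_laplacian_le_of_isLocalMax_div (hv.contDiffAt (ho.mem_nhds hy))
    (hφ.contDiffAt (ho.mem_nhds hy)) (hφ_pos y (subset_closure hy)) hmax⟩

theorem two_mul_eigenvalue_mul_sq_le_of_closedBall_subset (hφ : ContDiffOn ℝ 2 φ Ω)
    (hsuper : ∀ x ∈ Ω, Δ φ x + lam * φ x ≤ 0) (hpos : ∀ x ∈ Ω, 0 < φ x) {c : E} {r : ℝ}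
    (hr : 0 < r) (hball : closedBall c r ⊆ Ω) :
    2 * lam * r ^ 2 ≤ (finrank ℝ E + 2) ^ 2 := by
  set u : E → ℝ := fun y => r ^ 2 - ‖y - c‖ ^ 2 with hu
  have hu2 : ContDiff ℝ 2 (u ^ 2) :=
    (contDiff_const.sub ((contDiff_id.sub contDiff_const).norm_sq ℝ)).pow 2
  have hclosure : closure (ball c r) ⊆ Ω := closure_ball_subset_closedBall.trans hball
  obtain ⟨y, hy, hbarta⟩ : ∃ y ∈ ball c r, φ y * Δ (u ^ 2) y ≤ (u ^ 2) y * Δ φ y := by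
    refine exists_mul_laplacian_le_mul_laplacian isOpen_ball isBounded_ball hu2.contDiffOn
      hu2.continuous.continuousOn (hφ.mono (ball_subset_closedBall.trans hball))
      (hφ.continuousOn.mono hclosure) (fun x hx => hpos x (hclosure hx)) (fun x hx => ?_)
      ⟨c, mem_ball_self hr, ?_⟩
    · rw [frontier_ball c hr.ne', mem_sphere_iff_norm] at hx
      simp [hu, hx]
    · simpa [hu] using by positivity
  have hyΩ : y ∈ Ω := hball (ball_subset_closedBall hy)
  have huy : 0 < u y := by
    have : ‖y - c‖ < r := mem_ball_iff_norm.1 hy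
    simp only [hu, sub_pos]
    gcongr
  have hlap : Δ (u ^ 2) y = 8 * r ^ 2 - (4 * finrank ℝ E + 8) * u y := by
    rw [laplacian_sq_const_sub_norm_sub_sq]
    ring
  have hineq : 8 * r ^ 2 - (4 * finrank ℝ E + 8) * u y + lam * u y ^ 2 ≤ 0 := by
    refine nonpos_of_mul_nonpos_right ?_ (hpos y hyΩ)
    have := mul_le_mul_of_nonneg_left (hsuper y hyΩ) (sq_nonneg (u y))
    rw [hlap, Pi.pow_apply] at hbarta
    linarith
  -- `hineq` is quadratic in `u y`; completing the square eliminates its linear term.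
  have hsq : 2 * lam * r ^ 2 * u y ^ 2 ≤ (finrank ℝ E + 2) ^ 2 * u y ^ 2 := by
    have := mul_nonpos_of_nonneg_of_nonpos (by positivity : 0 ≤ 2 * r ^ 2) hineq
    linarith [sq_nonneg ((finrank ℝ E + 2) * u y - 4 * r ^ 2)]
  exact le_of_mul_le_mul_right hsq (by positivity)

theorem two_mul_eigenvalue_mul_sq_le_of_ball_subset (hφ : ContDiffOn ℝ 2 φ Ω)
    (hsuper : ∀ x ∈ Ω, Δ φ x + lam * φ x ≤ 0) (hpos : ∀ x ∈ Ω, 0 < φ x) {c : E} {r : ℝ}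
    (hr : 0 < r) (hball : ball c r ⊆ Ω) :
    2 * lam * r ^ 2 ≤ (finrank ℝ E + 2) ^ 2 := by
  have hlim : Tendsto (fun s => 2 * lam * s ^ 2) (𝓝[<] r) (𝓝 (2 * lam * r ^ 2)) :=
    ((by fun_prop : Continuous fun s : ℝ => 2 * lam * s ^ 2).tendsto r).mono_left
      nhdsWithin_le_nhds
  refine le_of_tendsto hlim ?_
  filter_upwards [Ioo_mem_nhdsLT hr] with s hs
  exact two_mul_eigenvalue_mul_sq_le_of_closedBall_subset hφ hsuper hpos hs.1
    ((closedBall_subset_ball hs.2).trans hball)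

theorem exists_isLocalMax_smul_add_smul_sq {X : Type*} [PseudoMetricSpace X] [ProperSpace X]
    {Ω : Set X} {φ q : X → ℝ} (ho : IsOpen Ω) (hb : Bornology.IsBounded Ω)
    (hcont : ContinuousOn φ (closure Ω)) (hfrontier : ∀ x ∈ frontier Ω, φ x ≤ 0) {x₀ : X}
    (hx₀ : x₀ ∈ Ω) (hpos : 0 < φ x₀) (hmax : IsMaxOn φ Ω x₀) (hq : Continuous q) {h : ℝ}
    (hq_le : ∀ x ∈ Ω, q x ≤ h) (hq₀ : 0 < q x₀) :
    ∃ y ∈ Ω, IsLocalMax (h ^ 2 • φ + φ x₀ • q ^ 2) y := by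
  have hq_le_closure : closure Ω ⊆ {x | q x ≤ h} :=
    closure_minimal hq_le (isClosed_le hq continuous_const)
  have hbound {z : X} (hz : z ∈ closure Ω) (hqz : 0 ≤ q z) (hz' : z ∈ Ω → q z ≤ 0) :
      h ^ 2 * φ z + φ x₀ * q z ^ 2 ≤ h ^ 2 * φ x₀ := by
    by_cases hzΩ : z ∈ Ω
    · have hqz_zero : q z = 0 := le_antisymm (hz' hzΩ) hqz
      simpa [hqz_zero] using mul_le_mul_of_nonneg_left (hmax hzΩ) (sq_nonneg h)
    · have hφz : φ z ≤ 0 := hfrontier z (ho.frontier_eq ▸ ⟨hz, hzΩ⟩)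
      have hqz_le : q z ≤ h := hq_le_closure hz
      calc h ^ 2 * φ z + φ x₀ * q z ^ 2 ≤ h ^ 2 * 0 + φ x₀ * h ^ 2 := by gcongr
        _ = h ^ 2 * φ x₀ := by ring
  obtain ⟨y, ⟨hy, -⟩, hloc⟩ :
      ∃ y ∈ Ω ∩ {y | 0 < q y}, IsLocalMax (h ^ 2 • φ + φ x₀ • q ^ 2) y := by
    refine (hb.isCompact_closure.inter_right (isClosed_le continuous_const hq)
      ).exists_isLocalMax_mem_open (inter_subset_inter subset_closure fun y (hy : 0 < q y) => hy.le)
      (((hcont.mono inter_subset_left).const_smul _).add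
        ((hq.pow 2).const_smul (φ x₀)).continuousOn)
      ⟨subset_closure hx₀, hq₀.le⟩ (fun z ⟨⟨hz, hqz⟩, hz'⟩ => ?_)
      (ho.inter (isOpen_lt continuous_const hq))
    exact (hbound hz hqz fun hzΩ => not_lt.1 fun hlt => hz' ⟨hzΩ, hlt⟩).trans_lt
      (lt_add_of_pos_right _ (mul_pos hpos (pow_pos hq₀ 2)))
  exact ⟨y, hy, hloc⟩

theorem two_mul_norm_sq_le_eigenvalue_mul_sq_of_subset_halfspace (ho : IsOpen Ω)
    (hb : Bornology.IsBounded Ω) (hφ : ContDiffOn ℝ 2 φ Ω) (hcont : ContinuousOn φ (closure Ω))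
    (hsub : ∀ x ∈ Ω, 0 ≤ Δ φ x + lam * φ x) (hpos : ∀ x ∈ Ω, 0 < φ x)
    (hfrontier : ∀ x ∈ frontier Ω, φ x ≤ 0) {x₀ : E} (hx₀ : x₀ ∈ Ω)
    (hmax : IsMaxOn φ Ω x₀) {F : StrongDual ℝ E} {a : ℝ} (hF : ∀ x ∈ Ω, F x ≤ a) {h : ℝ}
    (hh : a - F x₀ < h) : 2 * ‖F‖ ^ 2 ≤ lam * h ^ 2 := by
  set q : E → ℝ := fun x => F x - (a - h)
  have hq : ContDiff ℝ 2 q := F.contDiff.sub contDiff_const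
  obtain ⟨y, hy, hloc⟩ : ∃ y ∈ Ω, IsLocalMax (h ^ 2 • φ + φ x₀ • q ^ 2) y :=
    exists_isLocalMax_smul_add_smul_sq ho hb hcont hfrontier hx₀ (hpos x₀ hx₀) hmax hq.continuous
      (fun x hx => show F x - (a - h) ≤ h by linarith [hF x hx])
      (show 0 < F x₀ - (a - h) by linarith)
  have hφy : ContDiffAt ℝ 2 φ y := hφ.contDiffAt (ho.mem_nhds hy)
  have hφy' : ContDiffAt ℝ 2 (h ^ 2 • φ) y := hφy.const_smul (h ^ 2)
  have hq2 : ContDiffAt ℝ 2 (q ^ 2) y := (hq.pow 2).contDiffAt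
  have hq2' : ContDiffAt ℝ 2 (φ x₀ • q ^ 2) y := hq2.const_smul (φ x₀)
  have hlap : h ^ 2 * Δ φ y + φ x₀ * (2 * ‖F‖ ^ 2) ≤ 0 := by
    calc h ^ 2 * Δ φ y + φ x₀ * (2 * ‖F‖ ^ 2) = Δ (h ^ 2 • φ + φ x₀ • q ^ 2) y := by
          rw [hφy'.laplacian_add hq2', laplacian_smul _ hφy, laplacian_smul _ hq2,
            laplacian_sq_clm_sub_const, smul_eq_mul, smul_eq_mul]
      _ ≤ 0 := laplacian_nonpos_of_isLocalMax (hφy'.add hq2') hloc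
  have hle : 2 * ‖F‖ ^ 2 * φ x₀ ≤ lam * h ^ 2 * φ y := by
    linarith [mul_le_mul_of_nonneg_left (hsub y hy) (sq_nonneg h)]
  have hnonneg : 0 ≤ lam * h ^ 2 := nonneg_of_mul_nonneg_left
    ((mul_nonneg (by positivity) (hpos x₀ hx₀).le).trans hle) (hpos y hy)
  exact le_of_mul_le_mul_right
    (hle.trans (mul_le_mul_of_nonneg_left (hmax hy) hnonneg)) (hpos x₀ hx₀)

theorem two_le_eigenvalue_mul_dist_sq_of_notMem (ho : IsOpen Ω) (hconv : Convex ℝ Ω)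
    (hb : Bornology.IsBounded Ω) (hφ : ContDiffOn ℝ 2 φ Ω) (hcont : ContinuousOn φ (closure Ω))
    (hsub : ∀ x ∈ Ω, 0 ≤ Δ φ x + lam * φ x) (hpos : ∀ x ∈ Ω, 0 < φ x)
    (hfrontier : ∀ x ∈ frontier Ω, φ x ≤ 0) {x₀ p : E} (hx₀ : x₀ ∈ Ω)
    (hmax : IsMaxOn φ Ω x₀) (hp : p ∉ Ω) : 2 ≤ lam * dist x₀ p ^ 2 := by
  obtain ⟨F, hF⟩ := geometric_hahn_banach_open_point hconv ho hp
  have hF_pos : 0 < ‖F‖ := by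
    rw [norm_pos_iff]
    rintro rfl
    simpa using hF x₀ hx₀
  have hlim : Tendsto (fun s => lam * s ^ 2) (𝓝[>] dist x₀ p) (𝓝 (lam * dist x₀ p ^ 2)) :=
    ((by fun_prop : Continuous fun s : ℝ => lam * s ^ 2).tendsto _).mono_left nhdsWithin_le_nhds
  refine ge_of_tendsto hlim ?_
  filter_upwards [self_mem_nhdsWithin] with s hs
  have hheight : F p - F x₀ < ‖F‖ * s := by
    calc F p - F x₀ = F (p - x₀) := (map_sub F p x₀).symm
      _ ≤ ‖F‖ * dist x₀ p := by
        rw [dist_comm, dist_eq_norm]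
        exact (le_abs_self _).trans (F.le_opNorm _)
      _ < ‖F‖ * s := by gcongr; exact hs
  have hbound : 2 * ‖F‖ ^ 2 ≤ lam * (‖F‖ * s) ^ 2 :=
    two_mul_norm_sq_le_eigenvalue_mul_sq_of_subset_halfspace ho hb hφ hcont hsub hpos hfrontier
      hx₀ hmax (fun x hx => (hF x hx).le) hheight
  refine le_of_mul_le_mul_right (hbound.trans_eq ?_) (pow_pos hF_pos 2)
  ring

end EigenvalueBounds

section Inradius

variable {N : ℕ} {Ω : Set (EuclideanSpace ℝ (Fin N))}

theorem inradius_nonneg [Nonempty (Fin N)] : 0 ≤ inradius Ω :=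
  Real.sSup_nonneg' ⟨0, ⟨0, by simp⟩, le_rfl⟩

theorem inradius_le_of_forall_ball_subset {K : ℝ} (hK : 0 ≤ K)
    (h : ∀ c r, 0 < r → ball c r ⊆ Ω → r ≤ K) : inradius Ω ≤ K :=
  Real.sSup_le (fun r ⟨c, hr⟩ => (le_or_gt r 0).elim (·.trans hK) fun hr0 => h c r hr0 hr) hK

theorem inradius_le_diam [Nonempty (Fin N)] (hb : Bornology.IsBounded Ω) :
    inradius Ω ≤ diam Ω := by
  refine inradius_le_of_forall_ball_subset diam_nonneg fun c r hr hball => ?_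
  calc r ≤ 2 * r := by linarith
    _ = diam (ball c r) := (diam_ball_eq c hr.le).symm
    _ ≤ diam Ω := diam_mono hball hb

end Inradius

theorem eigenfunction_maximum_point_distance_bound_general {E : Type*} [NormedAddCommGroup E]
    [InnerProductSpace ℝ E] [FiniteDimensional ℝ E] [Nontrivial E] {Ω : Set E} (ho : IsOpen Ω)
    (hconv : Convex ℝ Ω) (hb : Bornology.IsBounded Ω) {lam : ℝ} {φ : E → ℝ}
    (hφ : ContDiffOn ℝ 2 φ Ω) (hcont : ContinuousOn φ (closure Ω))
    (heq : ∀ x ∈ Ω, Δ φ x + lam * φ x = 0) (hpos : ∀ x ∈ Ω, 0 < φ x)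
    (hfrontier : ∀ x ∈ frontier Ω, φ x = 0) {x₀ : E} (hx₀ : x₀ ∈ Ω) (hmax : IsMaxOn φ Ω x₀)
    {c : E} {r : ℝ} (hr : 0 < r) (hball : ball c r ⊆ Ω) :
    2 / (finrank ℝ E + 2) * r ≤ infDist x₀ (frontier Ω) := by
  have hne : (frontier Ω).Nonempty :=
    nonempty_frontier_iff.2 ⟨⟨x₀, hx₀⟩, fun h => NormedSpace.unbounded_univ ℝ E (h ▸ hb)⟩
  obtain ⟨p, hp, hdist⟩ := isClosed_frontier.exists_infDist_eq_dist hne x₀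
  have hp_notMem : p ∉ Ω := (ho.frontier_eq ▸ hp).2
  have hlower : 2 ≤ lam * dist x₀ p ^ 2 :=
    two_le_eigenvalue_mul_dist_sq_of_notMem ho hconv hb hφ hcont (fun x hx => (heq x hx).ge) hpos
      (fun x hx => (hfrontier x hx).le) hx₀ hmax hp_notMem
  have hupper : 2 * lam * r ^ 2 ≤ (finrank ℝ E + 2) ^ 2 :=
    two_mul_eigenvalue_mul_sq_le_of_ball_subset hφ (fun x hx => (heq x hx).le) hpos hr hball
  have hsq : (2 * r) ^ 2 ≤ (dist x₀ p * (finrank ℝ E + 2)) ^ 2 := by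
    calc (2 * r) ^ 2 = 2 * (2 * r ^ 2) := by ring
      _ ≤ lam * dist x₀ p ^ 2 * (2 * r ^ 2) := by gcongr
      _ = dist x₀ p ^ 2 * (2 * lam * r ^ 2) := by ring
      _ ≤ dist x₀ p ^ 2 * (finrank ℝ E + 2) ^ 2 := by gcongr
      _ = (dist x₀ p * (finrank ℝ E + 2)) ^ 2 := by ring
  rw [hdist, div_mul_eq_mul_div, div_le_iff₀ (by positivity)]
  exact le_of_sq_le_sq hsq (by positivity)

/-- **Brasco–Magnanini–Salani bound for the location of the maximum point of a first
Dirichlet eigenfunction.**  There is a constant `C_N > 0` depending only on `N` such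
that any maximum point `x_∞` of a positive solution of `Δφ + λφ = 0` in a bounded open
convex set `Ω`, vanishing on `∂Ω`, satisfies
`dist(x_∞, ∂Ω) ≥ C_N · r_Ω (r_Ω/diam Ω)^{N²-1}`. -/
theorem eigenfunction_maximum_point_distance_bound
    (N : ℕ) (hN : 0 < N) :
    ∃ C : ℝ, 0 < C ∧
      ∀ (Ω : Set (EuclideanSpace ℝ (Fin N))), IsOpen Ω → Convex ℝ Ω →
        Bornology.IsBounded Ω →
      ∀ lam : ℝ, 0 < lam →
      ∀ φ : EuclideanSpace ℝ (Fin N) → ℝ,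
        ContDiffOn ℝ 2 φ Ω → ContinuousOn φ (closure Ω) →
        (∀ x ∈ Ω, lapE φ x + lam * φ x = 0) →
        (∀ x ∈ Ω, 0 < φ x) →
        (∀ x ∈ frontier Ω, φ x = 0) →
      ∀ xm ∈ Ω, (∀ y ∈ closure Ω, φ y ≤ φ xm) →
        C * inradius Ω * (inradius Ω / Metric.diam Ω) ^ (N ^ 2 - 1) ≤
          Metric.infDist xm (frontier Ω) := by
  refine ⟨2 / (N + 2), by positivity, fun Ω ho hconv hb lam _ φ hφ hcont heq hpos hfrontier x₀ hx₀
    hmax => ?_⟩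
  have : Nonempty (Fin N) := ⟨⟨0, hN⟩⟩
  have heqΔ : ∀ x ∈ Ω, Δ φ x + lam * φ x = 0 := fun x hx => by
    rw [← lapE_eq_laplacian (hφ.contDiffAt (ho.mem_nhds hx)), heq x hx]
  have hC : (0 : ℝ) < 2 / (N + 2) := by positivity
  have hlinear : 2 / (N + 2) * inradius Ω ≤ infDist x₀ (frontier Ω) := by
    refine (le_div_iff₀' hC).1 (inradius_le_of_forall_ball_subset
      (div_nonneg infDist_nonneg hC.le) fun c r hr hball => (le_div_iff₀' hC).2 ?_)
    simpa using eigenfunction_maximum_point_distance_bound_general ho hconv hb hφ hcont heqΔ hpos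
      hfrontier hx₀ (fun y hy => hmax y (subset_closure hy)) hr hball
  have hratio : inradius Ω / diam Ω ≤ 1 := div_le_one_of_le₀ (inradius_le_diam hb) diam_nonneg
  calc 2 / (N + 2) * inradius Ω * (inradius Ω / diam Ω) ^ (N ^ 2 - 1)
      ≤ 2 / (N + 2) * inradius Ω := mul_le_of_le_one_right
        (mul_nonneg hC.le inradius_nonneg)
        (pow_le_one₀ (div_nonneg inradius_nonneg diam_nonneg) hratio)
    _ ≤ infDist x₀ (frontier Ω) := hlinear
end

section
/- Let φ : ℝ^N → ℝ be a bounded measurable function with compact support, with φ ≥ 0 everywhere and φ > 0 on a set of positive Lebesgue measure, and for t > 0 define u(x,t) = (4πt)^{−N/2} ∫_{ℝ^N} e^{−|x−y|²/(4t)} φ(y) dy (the solution of the Cauchy problem for the heat equation in ℝ^N with initial datum φ). Let K be the closed convex hull of the support of φ. Then for every t > 0: (i) the spatial gradient ∇_x u(x,t) is nonzero for every x ∉ K; and (ii) u(·,t) attains its maximum over ℝ^N, and every maximum point of u(·,t) belongs to K. In other words, all hot spots lie in the convex hull of the support of the initial datum. -/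
open MeasureTheory

/-!
If `x ∉ K`, a hyperplane separates `x` from `K`: some `v` satisfies `⟪x - y, v⟫ > 0` for all
`y ∈ K`.  The heat kernel strictly decreases at every point `z` in each direction `v` with
`⟪z, v⟫ > 0`, so every kernel centred in `K` strictly decreases at `x` in the direction `v`, and
integrating against the nonnegative datum gives `∂ᵥ u(x, t) < 0`.  A maximum exists because
`u(·, t)` is continuous, positive and vanishes at infinity; the gradient vanishes at a maximum
point, which therefore lies in `K`.
-/

open Bornology Filter Function Topology
open ContinuousLinearMap (lsmul)
open scoped Convolution

section Convolution

variable {G F : Type*} [NormedAddCommGroup G] [MeasurableSpace G] [OpensMeasurableSpace G]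
  [SecondCountableTopology G] [NormedAddCommGroup F] [NormedSpace ℝ F]
  {μ : Measure G} {f : G → ℝ} {g : G → F} {C : ℝ}

lemma convolutionExists_lsmul_of_integrable_of_bounded (hf : Integrable f μ) (hg : Continuous g)
    (hgC : ∀ z, ‖g z‖ ≤ C) : ConvolutionExists f g (lsmul ℝ ℝ) μ := fun x =>
  hf.smul_bdd C (Continuous.aestronglyMeasurable (by fun_prop)) (.of_forall fun y => hgC (x - y))

lemma tendsto_convolution_lsmul_cobounded (hf : Integrable f μ) (hg : Continuous g)
    (hgC : ∀ z, ‖g z‖ ≤ C) (hg0 : Tendsto g (cobounded G) (𝓝 0)) :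
    Tendsto (f ⋆[lsmul ℝ ℝ, μ] g) (cobounded G) (𝓝 0) := by
  have : (cobounded G).IsCountablyGenerated := by
    rw [← comap_norm_atTop]
    infer_instance
  have hlim : Tendsto (fun x => ∫ y, f y • g (x - y) ∂μ) (cobounded G) (𝓝 (∫ _, (0 : F) ∂μ)) := by
    refine tendsto_integral_filter_of_dominated_convergence (fun y => ‖f y‖ * C)
      (.of_forall fun x =>
        (convolutionExists_lsmul_of_integrable_of_bounded hf hg hgC x).aestronglyMeasurable)
      (.of_forall fun x => .of_forall fun y => ?_) (hf.norm.mul_const C) (.of_forall fun y => ?_)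
    · rw [norm_smul]
      gcongr
      exact hgC (x - y)
    · simpa using (hg0.comp (tendsto_sub_const_cobounded y)).const_smul (f y)
  rw [integral_zero] at hlim
  exact hlim

lemma hasFDerivAt_convolution_lsmul_of_bounded [NormedSpace ℝ G] {C' : ℝ} (hf : Integrable f μ)
    (hg : ContDiff ℝ 1 g) (hgC : ∀ z, ‖g z‖ ≤ C) (hgC' : ∀ z, ‖fderiv ℝ g z‖ ≤ C') (x : G) :
    HasFDerivAt (f ⋆[lsmul ℝ ℝ, μ] g) ((f ⋆[lsmul ℝ ℝ, μ] fderiv ℝ g) x) x := by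
  have hconv := convolutionExists_lsmul_of_integrable_of_bounded hf hg.continuous hgC
  have hconv' := convolutionExists_lsmul_of_integrable_of_bounded hf
    (hg.continuous_fderiv one_ne_zero) hgC'
  refine hasFDerivAt_integral_of_dominated_of_fderiv_le
    (F' := fun z y => f y • fderiv ℝ g (z - y)) (bound := fun y => ‖f y‖ * C') univ_mem
    (.of_forall fun z => (hconv z).aestronglyMeasurable) (hconv x)
    (hconv' x).aestronglyMeasurable (.of_forall fun y z _ => ?_) (hf.norm.mul_const C')
    (.of_forall fun y z _ => ?_)
  · rw [norm_smul]
    gcongr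
    exact hgC' (z - y)
  · have hgz := (hg.differentiable one_ne_zero (z - y)).hasFDerivAt
    exact (hgz.comp z ((hasFDerivAt_id z).sub_const y)).const_smul (f y)

end Convolution

lemma integral_mul_pos_of_pos_on_support {α : Type*} [MeasurableSpace α] {μ : Measure α}
    {f g : α → ℝ} (hf : 0 ≤ᵐ[μ] f) (hfpos : 0 < μ (support f))
    (hg : ∀ᵐ y ∂μ, f y ≠ 0 → 0 < g y) (hfg : Integrable (fun y => f y * g y) μ) :
    0 < ∫ y, f y * g y ∂μ := by
  have hnonneg : 0 ≤ᵐ[μ] fun y => f y * g y := by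
    filter_upwards [hf, hg] with y hfy hgy
    by_cases hy : f y = 0
    · simp [hy]
    · exact mul_nonneg hfy (hgy hy).le
  rw [integral_pos_iff_support_of_nonneg_ae hnonneg hfg]
  refine hfpos.trans_le (measure_mono_ae ?_)
  filter_upwards [hg] with y hgy hy
  exact mul_ne_zero hy (hgy hy).ne'

lemma exists_forall_mem_inner_sub_pos_of_notMem {E : Type*} [NormedAddCommGroup E]
    [InnerProductSpace ℝ E] [CompleteSpace E] {K : Set E} (hK : Convex ℝ K) (hKc : IsClosed K)
    {x : E} (hx : x ∉ K) : ∃ v, ∀ y ∈ K, 0 < inner ℝ (x - y) v := by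
  obtain ⟨ℓ, a, hℓK, hℓx⟩ := geometric_hahn_banach_closed_point hK hKc hx
  refine ⟨(InnerProductSpace.toDual ℝ E).symm ℓ, fun y hy => ?_⟩
  rw [real_inner_comm, InnerProductSpace.toDual_symm_apply, map_sub, sub_pos]
  exact (hℓK y hy).trans hℓx

theorem fderiv_convolution_ne_zero_of_notMem {E : Type*} [NormedAddCommGroup E]
    [InnerProductSpace ℝ E] [CompleteSpace E] [SecondCountableTopology E] [MeasurableSpace E]
    [OpensMeasurableSpace E] {μ : Measure E} {φ g : E → ℝ} {C C' : ℝ} {K : Set E} {x : E}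
    (hφ : Integrable φ μ) (hφ0 : 0 ≤ᵐ[μ] φ) (hφpos : 0 < μ (support φ))
    (hφK : ∀ᵐ y ∂μ, φ y ≠ 0 → y ∈ K) (hK : Convex ℝ K) (hKc : IsClosed K)
    (hg : ContDiff ℝ 1 g) (hgC : ∀ z, ‖g z‖ ≤ C) (hgC' : ∀ z, ‖fderiv ℝ g z‖ ≤ C')
    (hdecr : ∀ z v, 0 < inner ℝ z v → fderiv ℝ g z v < 0) (hx : x ∉ K) :
    fderiv ℝ (φ ⋆[lsmul ℝ ℝ, μ] g) x ≠ 0 := by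
  obtain ⟨v, hv⟩ := exists_forall_mem_inner_sub_pos_of_notMem hK hKc hx
  have hint : Integrable (fun y => φ y • fderiv ℝ g (x - y)) μ :=
    convolutionExists_lsmul_of_integrable_of_bounded hφ (hg.continuous_fderiv one_ne_zero) hgC' x
  have hderiv : fderiv ℝ (φ ⋆[lsmul ℝ ℝ, μ] g) x v = ∫ y, φ y * fderiv ℝ g (x - y) v ∂μ := by
    rw [(hasFDerivAt_convolution_lsmul_of_bounded hφ hg hgC hgC' x).fderiv]
    exact ContinuousLinearMap.integral_apply hint v
  have hpos : 0 < ∫ y, φ y * -fderiv ℝ g (x - y) v ∂μ := by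
    refine integral_mul_pos_of_pos_on_support hφ0 hφpos ?_ ?_
    · filter_upwards [hφK] with y hyK hy
      exact neg_pos.2 (hdecr _ _ (hv y (hyK hy)))
    · simp only [mul_neg]
      exact (hint.apply_continuousLinearMap v).neg
  simp only [mul_neg, integral_neg, ← hderiv] at hpos
  intro hzero
  simp [hzero] at hpos

theorem exists_forall_convolution_le {E : Type*} [NormedAddCommGroup E] [ProperSpace E]
    [MeasurableSpace E] [BorelSpace E] {μ : Measure E} {φ g : E → ℝ} {C : ℝ}
    (hφ : Integrable φ μ) (hφ0 : 0 ≤ᵐ[μ] φ) (hφpos : 0 < μ (support φ)) (hg : Continuous g)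
    (hgC : ∀ z, ‖g z‖ ≤ C) (hgpos : ∀ z, 0 < g z) (hg0 : Tendsto g (cobounded E) (𝓝 0)) :
    ∃ x, ∀ y, (φ ⋆[lsmul ℝ ℝ, μ] g) y ≤ (φ ⋆[lsmul ℝ ℝ, μ] g) x := by
  have hcont : Continuous (φ ⋆[lsmul ℝ ℝ, μ] g) :=
    BddAbove.continuous_convolution_right_of_integrable (lsmul ℝ ℝ)
      ⟨C, Set.forall_mem_range.2 hgC⟩ hφ hg
  have hpos : 0 < (φ ⋆[lsmul ℝ ℝ, μ] g) 0 :=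
    integral_mul_pos_of_pos_on_support hφ0 hφpos (.of_forall fun y _ => hgpos (0 - y))
      (convolutionExists_lsmul_of_integrable_of_bounded hφ hg hgC 0)
  have hlim := tendsto_convolution_lsmul_cobounded hφ hg hgC hg0
  rw [Metric.cobounded_eq_cocompact] at hlim
  exact hcont.exists_forall_ge' 0 ((hlim.eventually_lt_const hpos).mono fun _ h => h.le)

section HeatKernel

variable {E : Type*} [NormedAddCommGroup E] [InnerProductSpace ℝ E] {t : ℝ}

/-- The heat kernel `(4πt)^(-n/2) exp(-|z|²/(4t))` of an `n`-dimensional Euclidean space.  It is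
meant for `0 < t`, and `n` is `Module.finrank ℝ E`, which is `0` in infinite dimension. -/
noncomputable def heatKernel (t : ℝ) (z : E) : ℝ :=
  (4 * Real.pi * t) ^ (-(Module.finrank ℝ E : ℝ) / 2) * Real.exp (-(‖z‖ ^ 2) / (4 * t))

lemma heatKernel_pos (ht : 0 < t) (z : E) : 0 < heatKernel t z := by
  unfold heatKernel
  positivity

lemma heatKernel_eq_heatKernel_zero_mul (t : ℝ) (z : E) :
    heatKernel t z = heatKernel t (0 : E) * Real.exp (-(‖z‖ ^ 2) / (4 * t)) := by
  simp [heatKernel]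

lemma norm_heatKernel_le (ht : 0 < t) (z : E) : ‖heatKernel t z‖ ≤ heatKernel t (0 : E) := by
  rw [Real.norm_of_nonneg (heatKernel_pos ht z).le, heatKernel_eq_heatKernel_zero_mul]
  refine mul_le_of_le_one_right (heatKernel_pos ht 0).le (Real.exp_le_one_iff.2 ?_)
  rw [neg_div, neg_nonpos]
  positivity

lemma contDiff_heatKernel (t : ℝ) {n : WithTop ℕ∞} : ContDiff ℝ n (heatKernel t : E → ℝ) :=
  contDiff_const.mul (((contDiff_norm_sq ℝ).neg.div_const _).exp)

lemma tendsto_heatKernel_cobounded (ht : 0 < t) :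
    Tendsto (heatKernel t : E → ℝ) (cobounded E) (𝓝 0) := by
  have hsq : Tendsto (fun z : E => ‖z‖ ^ 2 / (4 * t)) (cobounded E) atTop :=
    ((tendsto_pow_atTop two_ne_zero).comp tendsto_norm_cobounded_atTop).atTop_div_const
      (by positivity)
  have hexp := (Real.tendsto_exp_neg_atTop_nhds_zero.comp hsq).const_mul (heatKernel t (0 : E))
  rw [mul_zero] at hexp
  refine hexp.congr fun z => ?_
  rw [heatKernel_eq_heatKernel_zero_mul t z, neg_div, comp_apply]

lemma fderiv_heatKernel (t : ℝ) (z : E) :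
    fderiv ℝ (heatKernel t) z = -(heatKernel t z / (2 * t)) • innerSL ℝ z := by
  have hsq : HasFDerivAt (fun z : E => -(‖z‖ ^ 2) / (4 * t))
      ((4 * t)⁻¹ • -((2 : ℕ) • innerSL ℝ z) : E →L[ℝ] ℝ) z := by
    simpa [div_eq_inv_mul] using! ((hasFDerivAt_id z).norm_sq.neg).const_mul (4 * t)⁻¹
  refine ((hsq.exp.const_mul _).congr_fderiv ?_).fderiv
  ext v
  simp only [heatKernel, mul_inv_rev, smul_neg, neg_smul, neg_apply, smul_apply, coe_innerSL_apply,
    nsmul_eq_mul, Nat.cast_ofNat, smul_eq_mul, neg_inj]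
  ring

lemma fderiv_heatKernel_neg_of_inner_pos (ht : 0 < t) {z v : E} (hzv : 0 < inner ℝ z v) :
    fderiv ℝ (heatKernel t) z v < 0 := by
  have hkernel := heatKernel_pos ht z
  rw [fderiv_heatKernel]
  simp only [neg_smul, neg_apply, smul_apply, innerSL_apply_apply, smul_eq_mul, Left.neg_neg_iff]
  positivity

lemma mul_exp_neg_sq_div_le_sqrt (ht : 0 < t) (s : ℝ) :
    s * Real.exp (-(s ^ 2) / (4 * t)) ≤ √t := by
  have hsq : √t ^ 2 = t := Real.sq_sqrt ht.le
  -- AM-GM for `s ^ 2 / (4 * t)` and `1`.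
  have hle : s ≤ √t * (s ^ 2 / (4 * t) + 1) := by
    have hsub : √t * (s ^ 2 / (4 * t) + 1) - s = (s - 2 * √t) ^ 2 / (4 * √t) := by
      field_simp
      linear_combination s ^ 2 * hsq
    rw [← sub_nonneg, hsub]
    positivity
  rw [neg_div, Real.exp_neg, ← div_eq_mul_inv, div_le_iff₀ (Real.exp_pos _)]
  exact hle.trans (by gcongr; exact Real.add_one_le_exp _)

lemma norm_fderiv_heatKernel_le (ht : 0 < t) (z : E) :
    ‖fderiv ℝ (heatKernel t) z‖ ≤ heatKernel t (0 : E) / (2 * t) * √t := by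
  have hzero := heatKernel_pos ht (0 : E)
  calc ‖fderiv ℝ (heatKernel t) z‖ = heatKernel t z / (2 * t) * ‖z‖ := by
        rw [fderiv_heatKernel, norm_smul, norm_neg, innerSL_apply_norm,
          Real.norm_of_nonneg (div_nonneg (heatKernel_pos ht z).le (by positivity))]
    _ = heatKernel t (0 : E) / (2 * t) * (‖z‖ * Real.exp (-(‖z‖ ^ 2) / (4 * t))) := by
        rw [heatKernel_eq_heatKernel_zero_mul]
        ring
    _ ≤ heatKernel t (0 : E) / (2 * t) * √t := by
        gcongr
        exact mul_exp_neg_sq_div_le_sqrt ht ‖z‖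

lemma convolution_heatKernel_apply [MeasurableSpace E] (μ : Measure E) (φ : E → ℝ) (t : ℝ) (x : E) :
    (φ ⋆[lsmul ℝ ℝ, μ] heatKernel t) x = (4 * Real.pi * t) ^ (-(Module.finrank ℝ E : ℝ) / 2) *
      ∫ y, Real.exp (-(‖x - y‖ ^ 2) / (4 * t)) * φ y ∂μ := by
  rw [convolution_def, ← integral_const_mul]
  congr with y
  simp only [ContinuousLinearMap.lsmul_apply, smul_eq_mul, heatKernel]
  ring

end HeatKernel

theorem heat_equation_hot_spots_in_convex_hull_of_support_general
    {E : Type*} [NormedAddCommGroup E] [InnerProductSpace ℝ E] [FiniteDimensional ℝ E]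
    [MeasurableSpace E] [BorelSpace E] {μ : Measure E} {φ : E → ℝ} {K : Set E} {t : ℝ}
    (hφ : Integrable φ μ) (hφ0 : 0 ≤ᵐ[μ] φ) (hφpos : 0 < μ (support φ))
    (hφK : ∀ᵐ y ∂μ, φ y ≠ 0 → y ∈ K) (hK : Convex ℝ K) (hKc : IsClosed K) (ht : 0 < t) :
    (∀ x ∉ K, fderiv ℝ (φ ⋆[lsmul ℝ ℝ, μ] heatKernel t) x ≠ 0) ∧
    (∃ x, ∀ y, (φ ⋆[lsmul ℝ ℝ, μ] heatKernel t) y ≤ (φ ⋆[lsmul ℝ ℝ, μ] heatKernel t) x) ∧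
    (∀ x, (∀ y, (φ ⋆[lsmul ℝ ℝ, μ] heatKernel t) y ≤ (φ ⋆[lsmul ℝ ℝ, μ] heatKernel t) x) →
      x ∈ K) := by
  have : ProperSpace E := FiniteDimensional.proper_real E
  have hgrad : ∀ x ∉ K, fderiv ℝ (φ ⋆[lsmul ℝ ℝ, μ] heatKernel t) x ≠ 0 := fun x hx =>
    fderiv_convolution_ne_zero_of_notMem hφ hφ0 hφpos hφK hK hKc (contDiff_heatKernel t)
      (norm_heatKernel_le ht) (norm_fderiv_heatKernel_le ht)
      (fun _ _ => fderiv_heatKernel_neg_of_inner_pos ht) hx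
  refine ⟨hgrad, ?_, fun x hmax => ?_⟩
  · exact exists_forall_convolution_le hφ hφ0 hφpos (contDiff_heatKernel t (n := 0)).continuous
      (norm_heatKernel_le ht) (heatKernel_pos ht) (tendsto_heatKernel_cobounded ht)
  · by_contra hx
    exact hgrad x hx (IsLocalMax.fderiv_eq_zero (.of_forall hmax))

/-- **Chavel–Karp: hot spots lie in the convex hull of the support of the initial
datum.**  Let `u` be the solution of the Cauchy problem for the heat equation in `ℝ^N`
with bounded, nonnegative, compactly supported initial datum `φ`, positive on a set of
positive measure, and let `K` be the closed convex hull of the support of `φ`.  Then for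
every `t > 0` the spatial gradient of `u(·,t)` does not vanish outside `K`, `u(·,t)`
attains its maximum over `ℝ^N`, and all of its maximum points lie in `K`. -/
theorem heat_equation_hot_spots_in_convex_hull_of_support
    (N : ℕ) (hN : 0 < N)
    (φ : EuclideanSpace ℝ (Fin N) → ℝ)
    (hmeas : Measurable φ)
    (hbdd : ∃ M : ℝ, ∀ x, |φ x| ≤ M)
    (hsupp : HasCompactSupport φ)
    (hnonneg : ∀ x, 0 ≤ φ x)
    (hpos : 0 < volume {x | 0 < φ x})
    (u : EuclideanSpace ℝ (Fin N) → ℝ → ℝ)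
    (hu : ∀ x t, u x t = Real.rpow (4 * Real.pi * t) (-(N : ℝ) / 2) *
      ∫ y, Real.exp (-(‖x - y‖ ^ 2) / (4 * t)) * φ y)
    (K : Set (EuclideanSpace ℝ (Fin N)))
    (hKdef : K = closure (convexHull ℝ (tsupport φ))) :
    ∀ t > (0 : ℝ),
      (∀ x ∉ K, fderiv ℝ (fun y => u y t) x ≠ 0) ∧
      (∃ x, ∀ y, u y t ≤ u x t) ∧
      (∀ x, (∀ y, u y t ≤ u x t) → x ∈ K) := by
  intro t ht
  obtain ⟨M, hM⟩ := hbdd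
  have hφ : Integrable φ := memLp_one_iff_integrable.1 <|
    hsupp.memLp_of_bound hmeas.aestronglyMeasurable M (.of_forall hM)
  have hφK : support φ ⊆ K :=
    hKdef ▸ (subset_tsupport φ).trans ((subset_convexHull ℝ _).trans subset_closure)
  have huconv : ∀ x, u x t = (φ ⋆[lsmul ℝ ℝ, volume] heatKernel t) x := fun x => by
    rw [hu, convolution_heatKernel_apply, finrank_euclideanSpace_fin, Real.rpow_eq_pow]
  simp only [huconv]
  exact heat_equation_hot_spots_in_convex_hull_of_support_general hφ (.of_forall hnonneg)
    (hpos.trans_le (measure_mono fun _ hy => hy.ne')) (.of_forall fun _ hy => hφK hy)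
    (hKdef ▸ (convex_convexHull ℝ _).closure) (hKdef ▸ isClosed_closure) ht
end

section
/- Let Q = (0,2π) × (0,2π) ⊂ ℝ² and define h(x₁,x₂,t) = −e^{−t}·(cos x₁ + cos x₂) for (x₁,x₂) ∈ closure(Q) and t > 0. Then h satisfies the heat equation h_t = Δh in Q × (0,∞) together with the homogeneous Neumann boundary condition ∂h/∂ν = 0 at every non-corner point of ∂Q × (0,∞), and for every t > 0 the maximum of h(·,t) over closure(Q) equals 2e^{−t} and is attained only at the interior point (π,π). Hence this insulated conductor has a hot spot that remains at a fixed interior point for all times. -/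
open Real

/-- The Laplacian of `f : ℝ² → ℝ` in the two coordinate directions. -/
noncomputable def lap2 (f : ℝ × ℝ → ℝ) (x : ℝ × ℝ) : ℝ :=
  fderiv ℝ (fun y => fderiv ℝ f y ((1, 0) : ℝ × ℝ)) x ((1, 0) : ℝ × ℝ) +
    fderiv ℝ (fun y => fderiv ℝ f y ((0, 1) : ℝ × ℝ)) x ((0, 1) : ℝ × ℝ)

/-!
The function `cos x₁ + cos x₂` is an eigenfunction of the Laplacian with eigenvalue `-1`, so
multiplying it by `-exp (-t)` gives a separated solution of the heat equation.  Its normal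
derivative vanishes on the sides of the square because `sin` vanishes at `0` and `2π`, and it is
maximal exactly where both cosines are `-1`, which in the closed square happens at `(π, π)` only.
-/

theorem fderiv_comp_clm_apply {E : Type*} [NormedAddCommGroup E] [NormedSpace ℝ E]
    (L : E →L[ℝ] ℝ) {f : ℝ → ℝ} {p : E} (hf : DifferentiableAt ℝ f (L p)) (v : E) :
    fderiv ℝ (fun q => f (L q)) p v = deriv f (L p) * L v := by
  have hcomp : HasFDerivAt (fun q => f (L q)) (deriv f (L p) • L) p :=
    hf.hasDerivAt.comp_hasFDerivAt p L.hasFDerivAt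
  rw [hcomp.fderiv, smul_apply, smul_eq_mul]

theorem fderiv_comp_fst_apply {f : ℝ → ℝ} {p : ℝ × ℝ} (hf : DifferentiableAt ℝ f p.1)
    (v : ℝ × ℝ) : fderiv ℝ (fun q : ℝ × ℝ => f q.1) p v = deriv f p.1 * v.1 :=
  fderiv_comp_clm_apply (ContinuousLinearMap.fst ℝ ℝ ℝ) hf v

theorem fderiv_comp_snd_apply {f : ℝ → ℝ} {p : ℝ × ℝ} (hf : DifferentiableAt ℝ f p.2)
    (v : ℝ × ℝ) : fderiv ℝ (fun q : ℝ × ℝ => f q.2) p v = deriv f p.2 * v.2 :=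
  fderiv_comp_clm_apply (ContinuousLinearMap.snd ℝ ℝ ℝ) hf v

theorem fderiv_fst_add_snd_apply {f g : ℝ → ℝ} {p : ℝ × ℝ} (hf : DifferentiableAt ℝ f p.1)
    (hg : DifferentiableAt ℝ g p.2) (v : ℝ × ℝ) :
    fderiv ℝ (fun q : ℝ × ℝ => f q.1 + g q.2) p v = deriv f p.1 * v.1 + deriv g p.2 * v.2 := by
  have hf₁ : DifferentiableAt ℝ (fun q : ℝ × ℝ => f q.1) p := hf.comp p differentiableAt_fst
  have hg₂ : DifferentiableAt ℝ (fun q : ℝ × ℝ => g q.2) p := hg.comp p differentiableAt_snd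
  rw [fderiv_fun_add hf₁ hg₂, add_apply, fderiv_comp_fst_apply hf, fderiv_comp_snd_apply hg]

theorem lap2_fst_add_snd {f g : ℝ → ℝ} {p : ℝ × ℝ} (hf : Differentiable ℝ f)
    (hg : Differentiable ℝ g) (hf' : DifferentiableAt ℝ (deriv f) p.1)
    (hg' : DifferentiableAt ℝ (deriv g) p.2) :
    lap2 (fun q => f q.1 + g q.2) p = deriv (deriv f) p.1 + deriv (deriv g) p.2 := by
  simp only [lap2, fderiv_fst_add_snd_apply (hf _) (hg _), mul_one, mul_zero, add_zero, zero_add,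
    fderiv_comp_fst_apply hf', fderiv_comp_snd_apply hg']

theorem fderiv_const_mul_field_apply {E : Type*} [NormedAddCommGroup E] [NormedSpace ℝ E]
    (c : ℝ) (f : E → ℝ) (p v : E) : fderiv ℝ (fun q => c * f q) p v = c * fderiv ℝ f p v :=
  congrArg (fun D : E → E →L[ℝ] ℝ => D p v) (fderiv_const_smul_field c)

theorem lap2_const_mul (c : ℝ) (u : ℝ × ℝ → ℝ) (p : ℝ × ℝ) :
    lap2 (fun q => c * u q) p = c * lap2 u p := by
  simp only [lap2, fderiv_const_mul_field_apply, mul_add]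

theorem deriv_mul_eq_lap2_of_lap2_eq_mul {c : ℝ → ℝ} {u : ℝ × ℝ → ℝ} {μ t : ℝ} {p : ℝ × ℝ}
    (hc : HasDerivAt c (μ * c t) t) (hu : lap2 u p = μ * u p) :
    deriv (fun s => c s * u p) t = lap2 (fun q => c t * u q) p := by
  rw [(hc.mul_const (u p)).deriv, lap2_const_mul, hu]
  ring

theorem lap2_cos_add_cos (p : ℝ × ℝ) :
    lap2 (fun q => cos q.1 + cos q.2) p = -1 * (cos p.1 + cos p.2) := by
  rw [lap2_fst_add_snd differentiable_cos differentiable_cos] <;>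
    simp only [Real.deriv_cos', deriv.fun_neg, Real.deriv_sin]
  · ring
  all_goals fun_prop

theorem cos_eq_neg_one_iff_of_lt_of_lt {x : ℝ} (hx₁ : -π < x) (hx₂ : x < 3 * π) :
    cos x = -1 ↔ x = π := by
  rw [← neg_inj, neg_neg, ← cos_sub_pi,
    cos_eq_one_iff_of_lt_of_lt (by linarith) (by linarith), sub_eq_zero]

theorem cos_add_cos_eq_neg_two_iff {x y : ℝ} : cos x + cos y = -2 ↔ cos x = -1 ∧ cos y = -1 := by
  have hx := neg_one_le_cos x
  have hy := neg_one_le_cos y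
  constructor
  · intro hsum
    constructor <;> linarith
  · rintro ⟨hx', hy'⟩
    linarith

/-- The temperature `h(x₁, x₂, t) = -exp (-t) * (cos x₁ + cos x₂)`, as a function of the point
`p = (x₁, x₂)` of the whole plane and of all times `t`, positive or not. -/
noncomputable def cosineTemperature (p : ℝ × ℝ) (t : ℝ) : ℝ :=
  -exp (-t) * (cos p.1 + cos p.2)

namespace cosineTemperature

theorem heat_equation (p : ℝ × ℝ) (t : ℝ) :
    deriv (fun s => cosineTemperature p s) t = lap2 (fun q => cosineTemperature q t) p := by
  have hdecay : HasDerivAt (fun s => -exp (-s)) (-1 * -exp (-t)) t := by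
    simpa only [mul_comm, mul_neg] using (hasDerivAt_neg t).exp.fun_neg
  exact deriv_mul_eq_lap2_of_lap2_eq_mul hdecay (lap2_cos_add_cos p)

theorem fderiv_apply (t : ℝ) (p v : ℝ × ℝ) :
    fderiv ℝ (fun q => cosineTemperature q t) p v =
      exp (-t) * (sin p.1 * v.1 + sin p.2 * v.2) := by
  simp only [cosineTemperature, fderiv_const_mul_field_apply,
    fderiv_fst_add_snd_apply differentiableAt_cos differentiableAt_cos, Real.deriv_cos]
  ring

theorem fderiv_fst_eq_zero (t : ℝ) {x : ℝ} (hx : sin x = 0) (y a : ℝ) :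
    fderiv ℝ (fun q => cosineTemperature q t) (x, y) (a, 0) = 0 := by
  simp [fderiv_apply, hx]

theorem fderiv_snd_eq_zero (t x : ℝ) {y : ℝ} (hy : sin y = 0) (a : ℝ) :
    fderiv ℝ (fun q => cosineTemperature q t) (x, y) (0, a) = 0 := by
  simp [fderiv_apply, hy]

theorem le_two_mul_exp (p : ℝ × ℝ) (t : ℝ) : cosineTemperature p t ≤ 2 * exp (-t) := by
  have hsum : -2 ≤ cos p.1 + cos p.2 := by
    linarith [neg_one_le_cos p.1, neg_one_le_cos p.2]
  calc cosineTemperature p t = exp (-t) * -(cos p.1 + cos p.2) := neg_mul_comm _ _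
    _ ≤ exp (-t) * 2 := by gcongr; linarith
    _ = 2 * exp (-t) := mul_comm _ _

theorem eq_two_mul_exp_iff {p : ℝ × ℝ} {t : ℝ} :
    cosineTemperature p t = 2 * exp (-t) ↔ cos p.1 = -1 ∧ cos p.2 = -1 := by
  have hfactor : 2 * exp (-t) = -exp (-t) * -2 := by ring
  rw [cosineTemperature, hfactor, mul_right_inj' (neg_ne_zero.2 (exp_ne_zero _)),
    cos_add_cos_eq_neg_two_iff]

theorem eq_two_mul_exp_iff_of_mem {p : ℝ × ℝ} {t : ℝ}
    (hp : p ∈ Set.Ioo (-π) (3 * π) ×ˢ Set.Ioo (-π) (3 * π)) :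
    cosineTemperature p t = 2 * exp (-t) ↔ p = (π, π) := by
  rw [eq_two_mul_exp_iff, cos_eq_neg_one_iff_of_lt_of_lt hp.1.1 hp.1.2,
    cos_eq_neg_one_iff_of_lt_of_lt hp.2.1 hp.2.2, Prod.ext_iff]

end cosineTemperature

theorem closure_square_subset :
    closure (Set.Ioo 0 (2 * π) ×ˢ Set.Ioo 0 (2 * π)) ⊆
      Set.Ioo (-π) (3 * π) ×ˢ Set.Ioo (-π) (3 * π) := by
  have hside : closure (Set.Ioo 0 (2 * π)) ⊆ Set.Ioo (-π) (3 * π) := by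
    rw [closure_Ioo two_pi_pos.ne]
    exact Set.Icc_subset_Ioo (neg_lt_zero.2 pi_pos) (by linarith [pi_pos])
  rw [closure_prod_eq]
  exact Set.prod_mono hside hside

theorem pi_pi_mem_square : (π, π) ∈ Set.Ioo 0 (2 * π) ×ˢ Set.Ioo 0 (2 * π) := by
  have hπ : π ∈ Set.Ioo 0 (2 * π) := ⟨pi_pos, by linarith [pi_pos]⟩
  exact ⟨hπ, hπ⟩

theorem insulated_square_stationary_interior_hot_spot_general :
    (∀ p t, deriv (fun s => cosineTemperature p s) t = lap2 (fun q => cosineTemperature q t) p) ∧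
    (∀ t y,
      fderiv ℝ (fun q => cosineTemperature q t) (0, y) (-1, 0) = 0 ∧
      fderiv ℝ (fun q => cosineTemperature q t) (2 * π, y) (1, 0) = 0 ∧
      fderiv ℝ (fun q => cosineTemperature q t) (y, 0) (0, -1) = 0 ∧
      fderiv ℝ (fun q => cosineTemperature q t) (y, 2 * π) (0, 1) = 0) ∧
    (π, π) ∈ Set.Ioo 0 (2 * π) ×ˢ Set.Ioo 0 (2 * π) ∧
    ∀ t,
      (∀ p, cosineTemperature p t ≤ 2 * exp (-t)) ∧
      cosineTemperature (π, π) t = 2 * exp (-t) ∧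
      ∀ p ∈ Set.Ioo (-π) (3 * π) ×ˢ Set.Ioo (-π) (3 * π),
        cosineTemperature p t = 2 * exp (-t) → p = (π, π) := by
  open cosineTemperature in
  refine ⟨heat_equation, fun t y => ⟨?_, ?_, ?_, ?_⟩, pi_pi_mem_square,
    fun t => ⟨fun p => le_two_mul_exp p t, ?_, fun p hp => (eq_two_mul_exp_iff_of_mem hp).1⟩⟩
  · exact fderiv_fst_eq_zero t sin_zero y (-1)
  · exact fderiv_fst_eq_zero t sin_two_pi y 1
  · exact fderiv_snd_eq_zero t y sin_zero (-1)
  · exact fderiv_snd_eq_zero t y sin_two_pi 1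
  · exact eq_two_mul_exp_iff.2 ⟨cos_pi, cos_pi⟩

/-- **A stationary interior hot spot for an insulated square conductor**
(Burdzy–Werner example).  With `Q = (0,2π)²`, the function
`h(x₁,x₂,t) = −e^{−t}(cos x₁ + cos x₂)` solves the heat equation in `Q × (0,∞)` with
homogeneous Neumann boundary conditions at every non-corner boundary point, and for
every `t > 0` its maximum over `closure Q` equals `2e^{−t}` and is attained only at the
interior point `(π, π)`. -/
theorem insulated_square_stationary_interior_hot_spot
    (Q : Set (ℝ × ℝ))
    (hQ : Q = Set.Ioo (0 : ℝ) (2 * π) ×ˢ Set.Ioo (0 : ℝ) (2 * π))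
    (h : ℝ × ℝ → ℝ → ℝ)
    (hh : h = fun p t => -Real.exp (-t) * (Real.cos p.1 + Real.cos p.2)) :
    -- the heat equation in `Q × (0,∞)`
    (∀ p ∈ Q, ∀ t > (0 : ℝ), deriv (fun s => h p s) t = lap2 (fun q => h q t) p) ∧
    -- homogeneous Neumann conditions at all non-corner boundary points
    (∀ t > (0 : ℝ), ∀ y ∈ Set.Ioo (0 : ℝ) (2 * π),
      fderiv ℝ (fun q => h q t) ((0 : ℝ), y) ((-1, 0) : ℝ × ℝ) = 0 ∧
      fderiv ℝ (fun q => h q t) ((2 * π), y) ((1, 0) : ℝ × ℝ) = 0 ∧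
      fderiv ℝ (fun q => h q t) (y, (0 : ℝ)) ((0, -1) : ℝ × ℝ) = 0 ∧
      fderiv ℝ (fun q => h q t) (y, (2 * π)) ((0, 1) : ℝ × ℝ) = 0) ∧
    -- `(π, π)` is an interior point
    ((π, π) ∈ Q) ∧
    -- the maximum of `h(·,t)` over `closure Q` equals `2e^{−t}`, attained only at `(π,π)`
    (∀ t > (0 : ℝ),
      (∀ p ∈ closure Q, h p t ≤ 2 * Real.exp (-t)) ∧
      h (π, π) t = 2 * Real.exp (-t) ∧
      (∀ p ∈ closure Q, h p t = 2 * Real.exp (-t) → p = (π, π))) := by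
  subst hQ hh
  obtain ⟨heat, neumann, interior, hmax⟩ := insulated_square_stationary_interior_hot_spot_general
  exact ⟨fun p _ t _ => heat p t, fun t _ y _ => neumann t y, interior, fun t _ =>
    ⟨fun p _ => (hmax t).1 p, (hmax t).2.1, fun p hp => (hmax t).2.2 p (closure_square_subset hp)⟩⟩
end
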